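/- arXiv:2103.07960 — 5 statements merged into one kernel-verified Lean document; each statement's English description precedes it below -/
import Mathlib

section
/- Every bounded parametrised scalar is realised by ZX phases: for every k : ℕ and every function s : (Fin n → ℝ) → ℂ such that ‖s θ‖ ≤ 2^k for all θ, there exist functions α, β : (Fin n → ℝ) → ℝ such that for all θ, s θ = 2^k * Complex.exp (Complex.I * α θ) * (1 + Complex.exp (Complex.I * β θ)) / 2. -/
/-! Factoring out the half-angle, `e^{ia} (1 + e^{ib}) / 2 = cos (b / 2) e^{i (a + b / 2)}`. Since
`‖s θ‖ ≤ 2 ^ k`, the phase `β` can be chosen so that `2 ^ k * cos (β / 2) = ‖s θ‖`; then `α` is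
chosen so that `α + β / 2` is the argument of `s θ`. -/

theorem exp_mul_one_add_exp_div_two (a b : ℂ) :
    Complex.exp (Complex.I * a) * (1 + Complex.exp (Complex.I * b)) / 2 =
      Complex.cos (b / 2) * Complex.exp (Complex.I * (a + b / 2)) := by
  rw [Complex.cos, div_mul_eq_mul_div, mul_add, add_mul, mul_one]
  simp only [← Complex.exp_add]
  ring_nf

theorem exists_eq_mul_cos_of_abs_le {x r : ℝ} (h : |x| ≤ r) : ∃ γ : ℝ, x = r * Real.cos γ := by
  have hr : 0 ≤ r := (abs_nonneg x).trans h
  have hratio : |x / r| ≤ 1 := by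
    rw [abs_div, abs_of_nonneg hr]
    exact div_le_one_of_le₀ h hr
  have hzero : r = 0 → x = 0 := fun hr0 => abs_nonpos_iff.mp (h.trans_eq hr0)
  refine ⟨Real.arccos (x / r), ?_⟩
  obtain ⟨hlower, hupper⟩ := abs_le.mp hratio
  rw [Real.cos_arccos hlower hupper, mul_div_cancel_of_imp' hzero]

theorem exists_eq_mul_exp_mul_one_add_exp_div_two {z : ℂ} {r : ℝ} (hz : ‖z‖ ≤ r) :
    ∃ a b : ℝ, z = r * Complex.exp (Complex.I * a) * (1 + Complex.exp (Complex.I * b)) / 2 := by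
  obtain ⟨γ, hγ⟩ := exists_eq_mul_cos_of_abs_le ((abs_norm z).trans_le hz)
  refine ⟨z.arg - γ, 2 * γ, ?_⟩
  calc
    z = ‖z‖ * Complex.exp (z.arg * Complex.I) := (Complex.norm_mul_exp_arg_mul_I z).symm
    _ = r * (Complex.cos γ * Complex.exp (Complex.I * z.arg)) := by
      rw [hγ, Complex.ofReal_mul, Complex.ofReal_cos, mul_assoc, mul_comm Complex.I]
    _ = r * Complex.exp (Complex.I * ↑(z.arg - γ)) *
          (1 + Complex.exp (Complex.I * ↑(2 * γ))) / 2 := by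
      rw [mul_assoc, mul_div_assoc, exp_mul_one_add_exp_div_two]
      push_cast
      rw [mul_div_cancel_left₀ _ two_ne_zero, sub_add_cancel]

theorem bounded_scalar_zx_phases_general {X : Type*} {r : ℝ} (s : X → ℂ)
    (hs : ∀ x, ‖s x‖ ≤ r) :
    ∃ α β : X → ℝ, ∀ x,
      s x = r * Complex.exp (Complex.I * α x) * (1 + Complex.exp (Complex.I * β x)) / 2 := by
  choose α β h using fun x => exists_eq_mul_exp_mul_one_add_exp_div_two (hs x)
  exact ⟨α, β, h⟩

/-- Every parametrised scalar `s : ℝⁿ → ℂ` bounded by `2^k` can be realised by ZX phases: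
there are phase functions `α, β : ℝⁿ → ℝ` with
`s θ = 2^k · e^{iα(θ)} · (1 + e^{iβ(θ)}) / 2` for all `θ`. -/
theorem bounded_scalar_zx_phases {n : ℕ} (k : ℕ) (s : (Fin n → ℝ) → ℂ)
    (hs : ∀ θ : Fin n → ℝ, ‖s θ‖ ≤ 2 ^ k) :
    ∃ α β : (Fin n → ℝ) → ℝ, ∀ θ : Fin n → ℝ,
      s θ = 2 ^ k * Complex.exp (Complex.I * α θ) *
        (1 + Complex.exp (Complex.I * β θ)) / 2 := by
  simpa using bounded_scalar_zx_phases_general s hs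
end

section
/- Gradient of a spider: let α : ℝ → ℝ be differentiable at θ, and let A, B : Matrix m n ℂ be fixed matrices (m, n finite types). Then the function f(t) = exp(-I·α(t)/2) • A + exp(I·α(t)/2) • B has derivative at θ equal to (deriv α θ / 2) • (exp(-I·(α(θ)+π)/2) • A + exp(I·(α(θ)+π)/2) • B). -/
open Complex Matrix

section

variable {𝕜 : Type*} [NontriviallyNormedField 𝕜] [NormedAlgebra 𝕜 ℂ]
  {α : 𝕜 → ℂ} {α' : ℂ} {θ : 𝕜}

-- The factor `c` produced by the chain rule is absorbed into the exponent as `exp (π / 2 * c)`.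
lemma hasDerivAt_exp_mul_div_two_of_exp_pi_div_two_mul_eq {c : ℂ}
    (hc : exp (Real.pi / 2 * c) = c) (hα : HasDerivAt α α' θ) :
    HasDerivAt (fun t => exp (c * α t / 2)) (α' / 2 * exp (c * (α θ + Real.pi) / 2)) θ := by
  have phase_shift : exp (c * (α θ + Real.pi) / 2) = exp (c * α θ / 2) * c :=
    calc exp (c * (α θ + Real.pi) / 2)
      _ = exp (c * α θ / 2 + Real.pi / 2 * c) := by ring_nf
      _ = exp (c * α θ / 2) * c := by rw [exp_add, hc]
  refine ((hα.const_mul c).div_const 2).cexp.congr_deriv ?_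
  rw [phase_shift]
  ring

lemma hasDerivAt_exp_I_mul_div_two (hα : HasDerivAt α α' θ) :
    HasDerivAt (fun t => exp (I * α t / 2)) (α' / 2 * exp (I * (α θ + Real.pi) / 2)) θ :=
  hasDerivAt_exp_mul_div_two_of_exp_pi_div_two_mul_eq exp_pi_div_two_mul_I hα

lemma hasDerivAt_exp_neg_I_mul_div_two (hα : HasDerivAt α α' θ) :
    HasDerivAt (fun t => exp (-(I * α t) / 2)) (α' / 2 * exp (-(I * (α θ + Real.pi)) / 2)) θ := by
  have exp_pi_div_two_mul_neg_I : exp (Real.pi / 2 * -I) = -I := by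
    rw [mul_neg, ← neg_mul, ← neg_div, exp_neg_pi_div_two_mul_I]
  simpa only [neg_mul] using
    hasDerivAt_exp_mul_div_two_of_exp_pi_div_two_mul_eq exp_pi_div_two_mul_neg_I hα

theorem deriv_spider_general {E : Type*} [NormedAddCommGroup E] [NormedSpace 𝕜 E]
    [NormedSpace ℂ E] [IsScalarTower 𝕜 ℂ E] (hα : HasDerivAt α α' θ) (A B : E) :
    HasDerivAt (fun t => exp (-(I * α t) / 2) • A + exp (I * α t / 2) • B)
      ((α' / 2) • (exp (-(I * (α θ + Real.pi)) / 2) • A +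
        exp (I * (α θ + Real.pi) / 2) • B)) θ := by
  simpa only [smul_add, smul_smul] using
    ((hasDerivAt_exp_neg_I_mul_div_two hα).smul_const A).fun_add
      ((hasDerivAt_exp_I_mul_div_two hα).smul_const B)

end

/-- Gradient of a spider: for fixed matrices `A B : Matrix m n ℂ` and a phase `α : ℝ → ℝ`
differentiable at `θ`, the function `f t = e^{-iα(t)/2} • A + e^{iα(t)/2} • B` has
derivative at `θ` equal to
`(deriv α θ / 2) • (e^{-i(α(θ)+π)/2} • A + e^{i(α(θ)+π)/2} • B)`
(derivatives of matrix-valued functions are taken entrywise). -/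
theorem deriv_spider {m n : Type*} [Fintype m] [Fintype n]
    (α : ℝ → ℝ) (θ : ℝ) (hα : DifferentiableAt ℝ α θ) (A B : Matrix m n ℂ) :
    ∀ i j, HasDerivAt
      (fun t : ℝ => (Complex.exp (-(Complex.I * (α t : ℂ)) / 2) • A +
        Complex.exp (Complex.I * (α t : ℂ) / 2) • B) i j)
      ((((deriv α θ / 2 : ℝ) : ℂ) •
        (Complex.exp (-(Complex.I * ((α θ + Real.pi : ℝ) : ℂ)) / 2) • A +
          Complex.exp (Complex.I * ((α θ + Real.pi : ℝ) : ℂ) / 2) • B)) i j) θ := by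
  intro i j
  exact_mod_cast deriv_spider_general hα.hasDerivAt.ofReal_comp (A i j) (B i j)
end

section
/- Differential characterisation of unitary groups: let U : ℝ → Matrix n n ℂ (n a finite type) be differentiable with continuous derivative and U 0 = 1. Then the following are equivalent: (i) U (s + t) = U s * U t for all s, t and (U t)ᴴ * U t = 1 for all t; (ii) there exists a constant self-adjoint matrix H (Hᴴ = H) such that deriv U t = (I • H) * U t for all t : ℝ. -/
open Complex Matrix

/-!
A differentiable one-parameter group solves `U' = G * U` with `G = U' 0`. Conversely, if `U` solves
this linear equation and `U 0 = 1`, then `s ↦ U (s + t)` and `s ↦ U s * U t` are two solutions which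
agree at `0`, hence everywhere. The derivative of `star U * U` is `star U * (star G + G) * U`, so
`U` is isometric precisely when `G` is skew-adjoint, that is, `G = I • H` with `H` self-adjoint.
-/

section Generator

variable {𝕜 A : Type*} [NontriviallyNormedField 𝕜] [NormedRing A] [NormedAlgebra 𝕜 A]
  {U : 𝕜 → A} {G : A}

theorem hasDerivAt_of_map_add_eq_mul (hadd : ∀ s t, U (s + t) = U s * U t)
    (hG : HasDerivAt U G 0) (t : 𝕜) : HasDerivAt U (G * U t) t := by
  have hshift : HasDerivAt (fun s => U (s + t)) (G * U t) (t - t) := by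
    simpa only [hadd, sub_self] using hG.mul_const (U t)
  simpa only [sub_add_cancel] using hshift.comp_sub_const t t

theorem mem_skewAdjoint_of_star_mul_self_eq_one [StarRing 𝕜] [TrivialStar 𝕜] [StarRing A]
    [ContinuousStar A] [StarModule 𝕜 A] {t₀ : 𝕜} (hstar : ∀ t, star (U t) * U t = 1)
    (hU₀ : U t₀ = 1) (hG : HasDerivAt U G t₀) : G ∈ skewAdjoint A := by
  have hconst : HasDerivAt (fun t => star (U t) * U t) 0 t₀ := by
    simpa only [hstar] using hasDerivAt_const t₀ (1 : A)
  have hsum : star G + G = 0 := by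
    simpa only [hU₀, star_one, mul_one, one_mul] using (hG.star.fun_mul hG).unique hconst
  exact skewAdjoint.mem_iff.2 (eq_neg_of_add_eq_zero_left hsum)

end Generator

section LinearODE

theorem eq_of_hasDerivAt_continuousLinearMap {E : Type*} [NormedAddCommGroup E] [NormedSpace ℝ E]
    {L : E →L[ℝ] E} {f g : ℝ → E} {t₀ : ℝ} (hf : ∀ t, HasDerivAt f (L (f t)) t)
    (hg : ∀ t, HasDerivAt g (L (g t)) t) (h₀ : f t₀ = g t₀) : f = g :=
  ODE_solution_unique_univ (s := fun _ => Set.univ) (fun _ => L.lipschitz.lipschitzOnWith)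
    (fun t => ⟨hf t, Set.mem_univ _⟩) (fun t => ⟨hg t, Set.mem_univ _⟩) h₀

variable {A : Type*} [NormedRing A] [NormedAlgebra ℝ A] {G : A}

theorem map_add_eq_mul_of_hasDerivAt {U : ℝ → A} (hU₀ : U 0 = 1)
    (hU : ∀ t, HasDerivAt U (G * U t) t) (s t : ℝ) : U (s + t) = U s * U t := by
  have hshift (r : ℝ) : HasDerivAt (fun r => U (r + t)) (G * U (r + t)) r :=
    (hU (r + t)).comp_add_const r t
  have hmul (r : ℝ) : HasDerivAt (fun r => U r * U t) (G * (U r * U t)) r := by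
    simpa only [mul_assoc] using (hU r).mul_const (U t)
  have hinit : U (0 + t) = U 0 * U t := by rw [zero_add, hU₀, one_mul]
  exact congrFun (eq_of_hasDerivAt_continuousLinearMap (L := ContinuousLinearMap.mul ℝ A G)
    hshift hmul hinit) s

theorem star_mul_eq_star_mul_of_hasDerivAt [StarRing A] [ContinuousStar A] [StarModule ℝ A]
    {V W : ℝ → A} (hG : G ∈ skewAdjoint A) (hV : ∀ t, HasDerivAt V (G * V t) t)
    (hW : ∀ t, HasDerivAt W (G * W t) t) (s t : ℝ) :
    star (V s) * W s = star (V t) * W t := by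
  have hzero (r : ℝ) : star (G * V r) * W r + star (V r) * (G * W r) = 0 := by
    rw [star_mul, skewAdjoint.mem_iff.1 hG, mul_neg, neg_mul, mul_assoc, neg_add_cancel]
  have hderiv (r : ℝ) : HasDerivAt (fun r => star (V r) * W r) 0 r :=
    hzero r ▸ (hV r).star.fun_mul (hW r)
  exact is_const_of_deriv_eq_zero (fun r => (hderiv r).differentiableAt)
    (fun r => (hderiv r).deriv) s t

end LinearODE

theorem hasDerivAt_matrix {𝕜 E m n : Type*} [NontriviallyNormedField 𝕜] [NormedAddCommGroup E]
    [NormedSpace 𝕜 E] [Finite m] [Finite n] {M : 𝕜 → Matrix m n E} {M' : Matrix m n E} {t : 𝕜} :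
    HasDerivAt M M' t ↔ ∀ i j, HasDerivAt (fun s => M s i j) (M' i j) t := by
  have := Fintype.ofFinite m
  have := Fintype.ofFinite n
  exact hasDerivAt_pi.trans (forall_congr' fun _ => hasDerivAt_pi)

theorem unitary_group_iff_deriv_general {A : Type*} [NormedRing A] [NormedAlgebra ℂ A]
    [StarRing A] [ContinuousStar A] [StarModule ℂ A] {U U' : ℝ → A} (hU0 : U 0 = 1)
    (hderiv : ∀ t, HasDerivAt U (U' t) t) :
    ((∀ s t, U (s + t) = U s * U t) ∧ ∀ t, star (U t) * U t = 1) ↔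
      ∃ H : A, IsSelfAdjoint H ∧ ∀ t, U' t = (I • H) * U t := by
  constructor
  · rintro ⟨hadd, hstar⟩
    have hskew : U' 0 ∈ skewAdjoint A :=
      mem_skewAdjoint_of_star_mul_self_eq_one hstar hU0 (hderiv 0)
    refine ⟨skewAdjoint.negISMul ⟨U' 0, hskew⟩, Subtype.property _, fun t => ?_⟩
    rw [skewAdjoint.I_smul_neg_I]
    exact (hderiv t).unique (hasDerivAt_of_map_add_eq_mul hadd (hderiv 0) t)
  · rintro ⟨H, hH, hU'⟩
    have hU (t : ℝ) : HasDerivAt U ((I • H) * U t) t := hU' t ▸ hderiv t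
    have hskew : I • H ∈ skewAdjoint A := I_smul_mem_skewAdjoint_iff_isSelfAdjoint.2 hH
    refine ⟨map_add_eq_mul_of_hasDerivAt hU0 hU, fun t => ?_⟩
    simpa only [hU0, star_one, mul_one] using star_mul_eq_star_mul_of_hasDerivAt hskew hU hU t 0

/-- Differential characterisation of one-parameter unitary groups: a continuously
differentiable `U : ℝ → Matrix n n ℂ` with `U 0 = 1` and entrywise derivative `U'`
is a one-parameter unitary group if and only if `U' t = (i • H) * U t` for some constant
self-adjoint matrix `H`. -/
theorem unitary_group_iff_deriv {n : Type*} [Fintype n] [DecidableEq n]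
    (U U' : ℝ → Matrix n n ℂ) (hU0 : U 0 = 1)
    (hderiv : ∀ (t : ℝ) (i j : n), HasDerivAt (fun s => U s i j) (U' t i j) t)
    (hcont : ∀ i j : n, Continuous fun t => U' t i j) :
    ((∀ s t : ℝ, U (s + t) = U s * U t) ∧ (∀ t : ℝ, (U t)ᴴ * U t = 1)) ↔
      ∃ H : Matrix n n ℂ, Hᴴ = H ∧ ∀ t : ℝ, U' t = (Complex.I • H) * U t := by
  -- `hasDerivAt_matrix` uses the entrywise topology, which is also that of the operator norm.
  open scoped Matrix.Norms.L2Operator in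
  exact unitary_group_iff_deriv_general hU0 fun t => hasDerivAt_matrix.2 (hderiv t)
end

section
/- Parameter-shift rule for the doubled Z rotation: let R : ℝ → Matrix (Fin 2) (Fin 2) ℂ be R θ = diagonal matrix with entries exp(-I·θ/2) and exp(I·θ/2), and define F θ = ((R θ).map conj) ⊗ₖ (R θ). Then for every θ : ℝ, F has derivative at θ equal to (1/2 : ℂ) • (F (θ + π/2) - F (θ - π/2)). -/
open Complex Matrix Kronecker

/-!
Doubling a diagonal unitary with phases `e^{iν_k t}` gives a diagonal unitary whose frequencies are
the gaps `ν_b - ν_a`. On a single phase, the symmetric difference with shift `s` and the derivative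
are both multiples of `e^{iωt}`, by `2i sin (ωs)` and `iω` respectively, so the rule with
coefficient `c` amounts to `2c sin (ωs) = ω`. For the Z rotation the gaps are `0` and `±1`, where
`sin (ωπ/2) = ω`.
-/

lemma exp_add_mul_I_sub_exp_sub_mul_I (z w : ℂ) :
    exp ((z + w) * I) - exp ((z - w) * I) = 2 * sin w * (exp (z * I) * I) := by
  simp only [sub_eq_add_neg, add_mul, exp_add, sin]
  linear_combination (exp (z * I) * (exp (w * I) - exp (-w * I))) * I_sq

lemma hasDerivAt_exp_mul_I_parameter_shift {c ω : ℂ} {s : ℝ} (h : 2 * c * sin (ω * s) = ω)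
    (θ : ℝ) :
    HasDerivAt (fun t : ℝ => exp (ω * t * I))
      (c * (exp (ω * (θ + s : ℝ) * I) - exp (ω * (θ - s : ℝ) * I))) θ := by
  have hderiv : HasDerivAt (fun t : ℝ => exp (ω * t * I)) (exp (ω * θ * I) * (ω * I)) θ := by
    simpa using (((hasDerivAt_id θ).ofReal_comp.const_mul ω).mul_const I).cexp
  convert hderiv using 1
  rw [ofReal_add, ofReal_sub, mul_add ω, mul_sub ω, exp_add_mul_I_sub_exp_sub_mul_I]
  linear_combination (exp (ω * θ * I) * I) * h

/-- The doubling `f̄ ⊗ f` of a pure quantum map `f`, given by its matrix. -/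
def doubling {m n : Type*} (M : Matrix m n ℂ) : Matrix (m × m) (n × n) ℂ :=
  M.map (starRingEnd ℂ) ⊗ₖ M

section PhaseRotation

variable {n : Type*} [DecidableEq n]

/-- The one-parameter group `t ↦ e^{itH}` generated by the diagonal Hamiltonian `H` with real
eigenvalues `ν`, written as an explicit diagonal matrix so that `n` may be infinite. -/
noncomputable def phaseRotation (ν : n → ℝ) (t : ℝ) : Matrix n n ℂ :=
  diagonal fun k => exp (ν k * t * I)

lemma doubling_phaseRotation (ν : n → ℝ) (t : ℝ) :
    doubling (phaseRotation ν t) = phaseRotation (fun p : n × n => ν p.2 - ν p.1) t := by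
  rw [doubling, phaseRotation, diagonal_map (map_zero _), diagonal_kronecker_diagonal,
    phaseRotation]
  congr 1
  funext p
  rw [← exp_conj, ← exp_add]
  congr 1
  simp only [map_mul, conj_ofReal, conj_I, ofReal_sub]
  ring

lemma hasDerivAt_phaseRotation_parameter_shift {ν : n → ℝ} {c : ℂ} {s : ℝ}
    (h : ∀ k, 2 * c * sin (ν k * s) = ν k) (θ : ℝ) (i j : n) :
    HasDerivAt (fun t => phaseRotation ν t i j)
      ((c • (phaseRotation ν (θ + s) - phaseRotation ν (θ - s))) i j) θ := by
  simp only [phaseRotation, Matrix.smul_apply, Matrix.sub_apply, smul_eq_mul]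
  rcases eq_or_ne i j with rfl | hij
  · simpa only [diagonal_apply_eq] using hasDerivAt_exp_mul_I_parameter_shift (h i) θ
  · simpa only [diagonal_apply_ne _ hij, sub_self, mul_zero] using hasDerivAt_const θ (0 : ℂ)

theorem z_rotation_parameter_shift_general {ν : n → ℝ} {c : ℂ} {s : ℝ}
    (h : ∀ a b, 2 * c * sin ((ν b - ν a) * s) = ν b - ν a) (θ : ℝ) (i j : n × n) :
    HasDerivAt (fun t => doubling (phaseRotation ν t) i j)
      ((c • (doubling (phaseRotation ν (θ + s)) - doubling (phaseRotation ν (θ - s)))) i j) θ := by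
  simp only [doubling_phaseRotation]
  exact hasDerivAt_phaseRotation_parameter_shift
    (fun p => by simpa only [ofReal_sub] using h p.1 p.2) θ i j

end PhaseRotation

/-- The eigenvalues of the generator `-Z/2` of the Z rotation. -/
noncomputable def zFrequency : Fin 2 → ℝ := ![-1 / 2, 1 / 2]

lemma phaseRotation_zFrequency (t : ℝ) :
    phaseRotation zFrequency t = diagonal ![exp (-(I * (t : ℂ)) / 2), exp (I * (t : ℂ) / 2)] := by
  rw [phaseRotation]
  congr 1
  funext k
  fin_cases k <;>
    simp only [zFrequency, Fin.zero_eta, Fin.mk_one, cons_val_zero, cons_val_one, ofReal_div,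
      ofReal_neg, ofReal_one, ofReal_ofNat] <;>
    ring_nf

lemma sin_zFrequency_gap_mul_pi_div_two (a b : Fin 2) :
    sin ((zFrequency b - zFrequency a) * (Real.pi / 2 : ℝ)) = zFrequency b - zFrequency a := by
  fin_cases a <;> fin_cases b <;> norm_num [zFrequency]

/-- Parameter-shift rule for the doubled Z rotation: with
`R θ = diag(e^{-iθ/2}, e^{iθ/2})` and `F θ = conj(R θ) ⊗ₖ R θ`, the map `F` has entrywise
derivative at `θ` equal to `(1/2) • (F (θ + π/2) - F (θ - π/2))`. -/
theorem z_rotation_parameter_shift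
    (R : ℝ → Matrix (Fin 2) (Fin 2) ℂ)
    (hR : ∀ θ : ℝ, R θ = Matrix.diagonal
      ![Complex.exp (-(Complex.I * (θ : ℂ)) / 2), Complex.exp (Complex.I * (θ : ℂ) / 2)])
    (F : ℝ → Matrix (Fin 2 × Fin 2) (Fin 2 × Fin 2) ℂ)
    (hF : ∀ θ : ℝ, F θ = ((R θ).map (starRingEnd ℂ)) ⊗ₖ (R θ)) :
    ∀ (θ : ℝ) (i j : Fin 2 × Fin 2), HasDerivAt (fun t => F t i j)
      (((1 / 2 : ℂ) • (F (θ + Real.pi / 2) - F (θ - Real.pi / 2))) i j) θ := by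
  have hdoubling (t : ℝ) : F t = doubling (phaseRotation zFrequency t) := by
    rw [hF, hR, phaseRotation_zFrequency, doubling]
  simp only [hdoubling]
  exact z_rotation_parameter_shift_general fun a b => by
    rw [sin_zFrequency_gap_mul_pi_div_two]; ring
end

section
/- Doubling is faithful up to a global phase: for matrices f, g : Matrix m n ℂ (m, n finite types), (f.map conj) ⊗ₖ f = (g.map conj) ⊗ₖ g if and only if there exists z : ℂ with ‖z‖ = 1 such that f = z • g. -/
/-!
Reshuffling the indices turns `conj(f) ⊗ₖ f` into the rank-one matrix `conj(v) vᵀ`, where `v` lists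
the entries of `f`. If `v i ≠ 0`, the `i`-th row of this matrix recovers `v` up to the factor
`conj(v i)`, so two vectors `v`, `w` with the same rank-one matrix satisfy `v = z • w` with
`z = conj(v i)⁻¹ * conj(w i)`; comparing the `i`-th diagonal entries shows that `z` is a phase.
-/

open Matrix Kronecker

theorem kronecker_eq_kronecker_iff_vecMulVec_vec {l m n p R : Type*} [Mul R]
    {A C : Matrix l m R} {B D : Matrix n p R} :
    A ⊗ₖ B = C ⊗ₖ D ↔ vecMulVec A.vec B.vec = vecMulVec C.vec D.vec := by
  constructor <;> intro h
  · ext ⟨b, a⟩ ⟨d, c⟩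
    exact congrFun₂ h (a, c) (b, d)
  · ext ⟨a, c⟩ ⟨b, d⟩
    exact congrFun₂ h (b, a) (d, c)

section StarDivisionRing

variable {K : Type*} [DivisionRing K] [StarRing K]

theorem inv_star_mul_star_mem_unitary {x y : K} (hx : x ≠ 0)
    (h : star x * x = star y * y) : (star x)⁻¹ * star y ∈ unitary K := by
  have mul_star_eq_one : (star x)⁻¹ * star y * star ((star x)⁻¹ * star y) = 1 := by
    calc
      (star x)⁻¹ * star y * star ((star x)⁻¹ * star y)
          = (star x)⁻¹ * (star y * y) * x⁻¹ := by
        simp only [star_mul, star_star, star_inv₀, mul_assoc]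
      _ = (star x)⁻¹ * (star x * x) * x⁻¹ := by rw [h]
      _ = 1 := by
        rw [inv_mul_cancel_left₀ (star_ne_zero.2 hx), mul_inv_cancel₀ hx]
  exact Unitary.mem_iff.2 ⟨mul_eq_one_comm.1 mul_star_eq_one, mul_star_eq_one⟩

theorem vecMulVec_star_self_smul {ι : Type*} {z : K} (hz : z ∈ unitary K) (v : ι → K) :
    vecMulVec (star (z • v)) (z • v) = vecMulVec (star v) v := by
  ext i j
  calc
    star (z * v i) * (z * v j) = star (v i) * (star z * z) * v j := by
      simp only [star_mul, mul_assoc]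
    _ = star (v i) * v j := by rw [Unitary.star_mul_self_of_mem hz, mul_one]

theorem vecMulVec_star_self_eq_iff {ι : Type*} {v w : ι → K} :
    vecMulVec (star v) v = vecMulVec (star w) w ↔ ∃ z ∈ unitary K, v = z • w := by
  constructor
  · intro h
    obtain rfl | hv := eq_or_ne v 0
    · have hw : w = 0 := by simpa using h.symm
      exact ⟨1, one_mem _, by rw [hw, smul_zero]⟩
    · obtain ⟨i, hi⟩ := Function.ne_iff.1 hv
      have entry (j : ι) : star (v i) * v j = star (w i) * w j := congrFun₂ h i j
      refine ⟨(star (v i))⁻¹ * star (w i), inv_star_mul_star_mem_unitary hi (entry i), ?_⟩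
      ext j
      rw [Pi.smul_apply, smul_eq_mul, mul_assoc, ← entry,
        inv_mul_cancel_left₀ (star_ne_zero.2 hi)]
  · rintro ⟨z, hz, rfl⟩
    exact vecMulVec_star_self_smul hz w

theorem doubling_faithful_up_to_phase_general {m n : Type*} (f g : Matrix m n K) :
    f.map star ⊗ₖ f = g.map star ⊗ₖ g ↔ ∃ z ∈ unitary K, f = z • g := by
  calc
    f.map star ⊗ₖ f = g.map star ⊗ₖ g
        ↔ vecMulVec (star f.vec) f.vec = vecMulVec (star g.vec) g.vec :=
      kronecker_eq_kronecker_iff_vecMulVec_vec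
    _ ↔ ∃ z ∈ unitary K, f.vec = z • g.vec := vecMulVec_star_self_eq_iff
    _ ↔ ∃ z ∈ unitary K, f = z • g := by simp only [← vec_smul, vec_inj]

end StarDivisionRing

theorem mem_unitary_iff_norm_eq_one {𝕜 : Type*} [RCLike 𝕜] {z : 𝕜} :
    z ∈ unitary 𝕜 ↔ ‖z‖ = 1 := by
  rw [Unitary.mem_iff_star_mul_self, RCLike.star_def, RCLike.conj_mul]
  norm_cast
  exact pow_eq_one_iff_of_nonneg (norm_nonneg z) two_ne_zero

/-- Doubling is faithful up to a global phase: two complex matrices have the same doubling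
`conj(f) ⊗ₖ f = conj(g) ⊗ₖ g` if and only if they agree up to a unit-norm scalar. -/
theorem doubling_faithful_up_to_phase {m n : Type*} [Fintype m] [Fintype n]
    (f g : Matrix m n ℂ) :
    (f.map (starRingEnd ℂ)) ⊗ₖ f = (g.map (starRingEnd ℂ)) ⊗ₖ g ↔
      ∃ z : ℂ, ‖z‖ = 1 ∧ f = z • g := by
  simp_rw [← mem_unitary_iff_norm_eq_one]
  exact doubling_faithful_up_to_phase_general f g
end
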